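/- arXiv:1205.5424 — 2 statements merged into one kernel-verified Lean document; each statement's English description precedes it below -/
import Mathlib

section
/- (Partial derivatives of the Tutte polynomial as orientation generating functions, realizable case.) For every vector configuration v : Fin n → V, every linear map π : V →ₗ[ℝ] W with v' = π ∘ v, all natural numbers p, q, and all real x, y: the iterated partial derivative ∂^{p+q} t / ∂x^p ∂y^q of the two-variable polynomial t(M,M';x,y,1), evaluated at (x,y), equals p! · q! · ∑_{A ⊆ Fin n with θ̄*_{M'}(A) = p and θ̄_M(A) = q} x^{θ*_{M'}(A)} y^{θ_M(A)}. -/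
open Set Submodule

/-- The reorientation of the vector configuration `v` on the subset `A`:
vectors indexed by `A` are negated. -/
def reorient {n : ℕ} {V : Type*} [AddCommGroup V] (v : Fin n → V) (A : Finset (Fin n)) :
    Fin n → V :=
  fun i => if i ∈ A then -v i else v i

/-- `a` is orientation-active for the configuration `w`: it is the smallest element of a
positive circuit, i.e. there is a nonnegative linear dependence with positive coefficient
at `a` and zero coefficients below `a`. -/
def OActive {n : ℕ} {V : Type*} [AddCommGroup V] [Module ℝ V]
    (w : Fin n → V) (a : Fin n) : Prop :=
  ∃ c : Fin n → ℝ, (∀ i, 0 ≤ c i) ∧ (∑ i, c i • w i) = 0 ∧ 0 < c a ∧ ∀ i < a, c i = 0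

/-- `a` is dually orientation-active for the configuration `w`: it is the smallest element of
a positive cocircuit, i.e. there is a linear functional, nonnegative on the configuration,
positive at `w a` and vanishing on the vectors below `a`. -/
def ODualActive {n : ℕ} {V : Type*} [AddCommGroup V] [Module ℝ V]
    (w : Fin n → V) (a : Fin n) : Prop :=
  ∃ f : V →ₗ[ℝ] ℝ, (∀ i, 0 ≤ f (w i)) ∧ 0 < f (w a) ∧ ∀ i < a, f (w i) = 0

/-- `θ*(A)`: the number of elements outside `A` that are dually orientation-active for `v_A`. -/
noncomputable def thetaStar {n : ℕ} {V : Type*} [AddCommGroup V] [Module ℝ V]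
    (v : Fin n → V) (A : Finset (Fin n)) : ℕ :=
  {a : Fin n | a ∉ A ∧ ODualActive (reorient v A) a}.ncard

/-- `θ̄*(A)`: the number of elements of `A` that are dually orientation-active for `v_A`. -/
noncomputable def thetaStarBar {n : ℕ} {V : Type*} [AddCommGroup V] [Module ℝ V]
    (v : Fin n → V) (A : Finset (Fin n)) : ℕ :=
  {a : Fin n | a ∈ A ∧ ODualActive (reorient v A) a}.ncard

/-- `θ(A)`: the number of elements outside `A` that are orientation-active for `v_A`. -/
noncomputable def theta {n : ℕ} {V : Type*} [AddCommGroup V] [Module ℝ V]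
    (v : Fin n → V) (A : Finset (Fin n)) : ℕ :=
  {a : Fin n | a ∉ A ∧ OActive (reorient v A) a}.ncard

/-- `θ̄(A)`: the number of elements of `A` that are orientation-active for `v_A`. -/
noncomputable def thetaBar {n : ℕ} {V : Type*} [AddCommGroup V] [Module ℝ V]
    (v : Fin n → V) (A : Finset (Fin n)) : ℕ :=
  {a : Fin n | a ∈ A ∧ OActive (reorient v A) a}.ncard

/-- The rank of a set of indices: the dimension of the span of the corresponding vectors. -/
noncomputable def vrank {n : ℕ} {V : Type*} [AddCommGroup V] [Module ℝ V]
    (v : Fin n → V) (S : Set (Fin n)) : ℕ :=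
  Module.finrank ℝ ↥(span ℝ (v '' S))

/-- The Tutte polynomial of the matroid realized by the configuration `v`:
`t(x,y) = ∑_{A ⊆ Fin n} (x-1)^(r(E) - r(A)) * (y-1)^(|A| - r(A))`. -/
noncomputable def tutteV {n : ℕ} {V : Type*} [AddCommGroup V] [Module ℝ V]
    (v : Fin n → V) (x y : ℝ) : ℝ :=
  ∑ A : Finset (Fin n),
    (x - 1) ^ (vrank v Set.univ - vrank v ↑A) * (y - 1) ^ (A.card - vrank v ↑A)

/-- The evaluation at `z = 1` of the 3-variable Tutte polynomial of the oriented matroid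
perspective realized by the configurations `v` (for `M`) and `v'` (for `M'`):
`t(M,M';x,y,1) = ∑_{A ⊆ Fin n} (x-1)^(r'(E) - r'(A)) * (y-1)^(|A| - r(A))`. -/
noncomputable def tuttePerspV {n : ℕ} {V W : Type*} [AddCommGroup V] [Module ℝ V]
    [AddCommGroup W] [Module ℝ W] (v : Fin n → V) (v' : Fin n → W) (x y : ℝ) : ℝ :=
  ∑ A : Finset (Fin n),
    (x - 1) ^ (vrank v' Set.univ - vrank v' ↑A) * (y - 1) ^ (A.card - vrank v ↑A)

/-!
Both matroids are encoded by subspaces of coordinate space: `K`, the linear relations of `v`, and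
`L`, the value vectors `f ∘ v'` of linear functionals. They are orthogonal, and orthogonality is all
that is used. The key identity is the Taylor expansion

`t(M, M'; x + u, y + s, 1) = ∑ A, x ^ θ* A * u ^ θ̄* A * y ^ θ A * s ^ θ̄ A`,

from which the mixed derivative at `u = s = 0` is read off. It is proved by induction on `n`. For
fixed signs on the other elements, consider the two signs of the last element `e`: eliminating `e`
between two vectors of the same subspace shows that for one of the signs the activities below `e`
are those of deletion or contraction, while orthogonality forces the pair `(K, L)` to realize each
of deletion and contraction exactly once. If `e` is a loop of `M` or a coloop of `M'`, deletion and
contraction agree and `e` itself is active for both signs.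
-/

/-! ### Subspaces of coordinate space and their ranks -/

section Rank

variable {𝕜 ι : Type*} [Field 𝕜]

/-- The coordinate subspace of the vectors that vanish on the index set `Z`. -/
def vanishingOn (𝕜 : Type*) [Field 𝕜] (Z : Set ι) : Submodule 𝕜 (ι → 𝕜) :=
  Submodule.pi Z fun _ => ⊥

/-- The dimension of the subspace of those vectors of `S` that vanish on `Z`. It is the nullity of
`Zᶜ` when `S` consists of the linear relations of a configuration, and the corank of `Z` when `S`
consists of the values of linear functionals on a configuration. -/
noncomputable def vanishingRank (S : Submodule 𝕜 (ι → 𝕜)) (Z : Set ι) : ℕ :=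
  Module.finrank 𝕜 ↥(S ⊓ vanishingOn 𝕜 Z)

variable {V W : Type*} [AddCommGroup V] [Module 𝕜 V] [AddCommGroup W] [Module 𝕜 W]

/-- The space of linear relations of a configuration; its vectors of minimal support are the
circuits. -/
def relations (𝕜 : Type*) [Field 𝕜] [Module 𝕜 V] [Fintype ι] (v : ι → V) :
    Submodule 𝕜 (ι → 𝕜) :=
  LinearMap.ker (Fintype.linearCombination 𝕜 v)

/-- The space of value vectors `f ∘ v` of linear functionals `f` on a configuration `v`; its
vectors of minimal support are the cocircuits. -/
def covectors (𝕜 : Type*) [Field 𝕜] [Module 𝕜 V] (v : ι → V) : Submodule 𝕜 (ι → 𝕜) :=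
  LinearMap.range (LinearMap.pi fun i => Module.Dual.eval 𝕜 V (v i))

lemma mem_vanishingOn {Z : Set ι} {c : ι → 𝕜} : c ∈ vanishingOn 𝕜 Z ↔ ∀ i ∈ Z, c i = 0 := by
  simp [vanishingOn, Submodule.mem_pi]

lemma mem_relations [Fintype ι] {v : ι → V} {c : ι → 𝕜} :
    c ∈ relations 𝕜 v ↔ ∑ i, c i • v i = 0 := by
  rw [relations, LinearMap.mem_ker, Fintype.linearCombination_apply]

lemma mem_covectors {v : ι → V} {c : ι → 𝕜} :
    c ∈ covectors 𝕜 v ↔ ∃ f : V →ₗ[𝕜] 𝕜, f ∘ v = c :=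
  Iff.rfl

lemma finrank_map_add_finrank_inf_ker (S : Submodule 𝕜 V) [FiniteDimensional 𝕜 S] (f : V →ₗ[𝕜] W) :
    Module.finrank 𝕜 (S.map f) + Module.finrank 𝕜 ↥(S ⊓ LinearMap.ker f) =
      Module.finrank 𝕜 S := by
  rw [← LinearMap.finrank_range_add_finrank_ker (f.domRestrict S), LinearMap.range_domRestrict,
    LinearMap.ker_domRestrict, ← Submodule.map_comap_subtype, Submodule.finrank_map_subtype_eq]

lemma vanishingOn_compl_eq_span [Finite ι] [DecidableEq ι] (A : Set ι) :
    vanishingOn 𝕜 Aᶜ = span 𝕜 ((fun i => Pi.single i (1 : 𝕜)) '' A) := by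
  ext c
  have hbasis : (fun i => Pi.single i (1 : 𝕜)) = Pi.basisFun 𝕜 ι := by
    ext i
    simp
  rw [mem_vanishingOn, hbasis, Module.Basis.mem_span_image]
  simp [subset_def, not_imp_comm]

lemma finrank_vanishingOn_compl [Finite ι] (A : Finset ι) :
    Module.finrank 𝕜 (vanishingOn 𝕜 (↑A : Set ι)ᶜ) = A.card := by
  classical
  have hli : LinearIndependent 𝕜 fun i : A => Pi.single (M := fun _ => 𝕜) (i : ι) 1 :=
    (Pi.linearIndependent_single_one ι 𝕜).comp ((↑) : A → ι) Subtype.val_injective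
  rw [vanishingOn_compl_eq_span, image_eq_range]
  exact (finrank_span_eq_card hli).trans (Fintype.card_coe A)

lemma finrank_span_add_vanishingRank_relations [Fintype ι] (v : ι → V) (A : Finset ι) :
    Module.finrank 𝕜 (span 𝕜 (v '' A)) + vanishingRank (relations 𝕜 v) (↑A)ᶜ = A.card := by
  classical
  have hmap : (vanishingOn 𝕜 (↑A : Set ι)ᶜ).map (Fintype.linearCombination 𝕜 v) =
      span 𝕜 (v '' A) := by
    rw [vanishingOn_compl_eq_span, Submodule.map_span, image_image]
    simp [Fintype.linearCombination_apply_single]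
  rw [← hmap, ← finrank_vanishingOn_compl (𝕜 := 𝕜) A, vanishingRank, inf_comm, relations]
  exact finrank_map_add_finrank_inf_ker _ _

lemma finrank_covectors [Finite ι] (v : ι → V) :
    Module.finrank 𝕜 (covectors 𝕜 v) = Module.finrank 𝕜 (span 𝕜 (range v)) := by
  classical
  have := Fintype.ofFinite ι
  have hcomp : LinearMap.pi (fun i => Module.Dual.eval 𝕜 V (v i)) =
      (LinearEquiv.piRing 𝕜 𝕜 ι 𝕜).toLinearMap ∘ₗ (Fintype.linearCombination 𝕜 v).dualMap := by
    ext f i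
    simp
  rw [covectors, hcomp, LinearMap.range_comp, LinearEquiv.finrank_map_eq,
    LinearMap.finrank_range_dualMap_eq_finrank_range, Fintype.range_linearCombination]

lemma finrank_span_add_vanishingRank_covectors [Finite ι] (v : ι → V) (A : Set ι) :
    Module.finrank 𝕜 (span 𝕜 (v '' A)) + vanishingRank (covectors 𝕜 v) A =
      Module.finrank 𝕜 (span 𝕜 (range v)) := by
  have := Fintype.ofFinite ι
  have := Fintype.ofFinite A
  have hmap : (covectors 𝕜 v).map (LinearMap.funLeft 𝕜 𝕜 ((↑) : A → ι)) =
      covectors 𝕜 (fun i : A => v i) := by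
    rw [covectors, ← LinearMap.range_comp]
    rfl
  have hker : LinearMap.ker (LinearMap.funLeft 𝕜 𝕜 ((↑) : A → ι)) = vanishingOn 𝕜 A := by
    ext c
    simp [mem_vanishingOn, funext_iff, LinearMap.funLeft_apply]
  rw [← finrank_covectors v, vanishingRank, ← hker, image_eq_range, ← finrank_covectors, ← hmap]
  exact finrank_map_add_finrank_inf_ker _ _

end Rank

/-! ### Puncturing and shortening -/

section LastCoordinate

variable {𝕜 : Type*} [Field 𝕜] {n : ℕ}

/-- The projection of `S` that forgets the last coordinate. It is the contraction of the last
element for spaces of relations, and its deletion for spaces of covectors. -/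
def puncture (S : Submodule 𝕜 (Fin (n + 1) → 𝕜)) : Submodule 𝕜 (Fin n → 𝕜) :=
  S.map (LinearMap.funLeft 𝕜 𝕜 Fin.castSucc)

/-- The vectors of `S` with last coordinate zero, with that coordinate forgotten. It is the deletion
of the last element for spaces of relations, and its contraction for spaces of covectors. -/
def shorten (S : Submodule 𝕜 (Fin (n + 1) → 𝕜)) : Submodule 𝕜 (Fin n → 𝕜) :=
  puncture (S ⊓ vanishingOn 𝕜 {Fin.last n})

open Classical in
/-- The number `1` if `S` contains the last unit vector, that is, if the last element is a loop (for
spaces of relations) or a coloop (for spaces of covectors), and `0` otherwise. -/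
noncomputable def lastRank (S : Submodule 𝕜 (Fin (n + 1) → 𝕜)) : ℕ :=
  if Pi.single (Fin.last n) 1 ∈ S then 1 else 0

variable {S : Submodule 𝕜 (Fin (n + 1) → 𝕜)}

lemma mem_puncture {c : Fin n → 𝕜} : c ∈ puncture S ↔ ∃ d ∈ S, d ∘ Fin.castSucc = c :=
  Iff.rfl

lemma mem_shorten {c : Fin n → 𝕜} :
    c ∈ shorten S ↔ ∃ d ∈ S, d (Fin.last n) = 0 ∧ d ∘ Fin.castSucc = c := by
  simp [shorten, mem_puncture, mem_vanishingOn, and_assoc]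

lemma eq_smul_single_last {c : Fin (n + 1) → 𝕜} (hc : ∀ i : Fin n, c i.castSucc = 0) :
    c = c (Fin.last n) • Pi.single (Fin.last n) 1 := by
  ext i
  cases i using Fin.lastCases <;> simp [hc]

lemma finrank_inf_span_single_last (S : Submodule 𝕜 (Fin (n + 1) → 𝕜)) :
    Module.finrank 𝕜 ↥(S ⊓ span 𝕜 {Pi.single (Fin.last n) 1}) = lastRank S := by
  have hne : (Pi.single (Fin.last n) 1 : Fin (n + 1) → 𝕜) ≠ 0 := by simp
  by_cases hS : Pi.single (Fin.last n) 1 ∈ S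
  · rw [inf_eq_right.2 (by simpa), finrank_span_singleton hne, lastRank, if_pos hS]
  · rw [((Submodule.disjoint_span_singleton' hne).2 hS).eq_bot, finrank_bot, lastRank, if_neg hS]

lemma vanishingRank_castSucc_image (S : Submodule 𝕜 (Fin (n + 1) → 𝕜)) (Z : Set (Fin n)) :
    vanishingRank S (Fin.castSucc '' Z) = vanishingRank (puncture S) Z + lastRank S := by
  have hcomap : vanishingOn 𝕜 (Fin.castSucc '' Z) =
      (vanishingOn 𝕜 Z).comap (LinearMap.funLeft 𝕜 𝕜 Fin.castSucc) := by
    ext c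
    simp [mem_vanishingOn, LinearMap.funLeft_apply]
  have hker : vanishingOn 𝕜 (Fin.castSucc '' Z) ⊓ LinearMap.ker (LinearMap.funLeft 𝕜 𝕜
      Fin.castSucc) = span 𝕜 {Pi.single (Fin.last n) (1 : 𝕜)} := by
    ext c
    simp only [Submodule.mem_inf, mem_vanishingOn, forall_mem_image, LinearMap.mem_ker,
      Submodule.mem_span_singleton]
    constructor
    · rintro ⟨-, hc⟩
      exact ⟨_, (eq_smul_single_last (congrFun hc)).symm⟩
    · rintro ⟨t, rfl⟩
      exact ⟨by simp, funext fun i => by simp⟩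
  rw [vanishingRank, vanishingRank, ← finrank_map_add_finrank_inf_ker _
    (LinearMap.funLeft 𝕜 𝕜 Fin.castSucc), inf_assoc, hker, hcomap,
    ← Submodule.map_inf_eq_map_inf_comap, puncture, finrank_inf_span_single_last]

lemma vanishingRank_insert_last (S : Submodule 𝕜 (Fin (n + 1) → 𝕜)) (Z : Set (Fin n)) :
    vanishingRank S (insert (Fin.last n) (Fin.castSucc '' Z)) = vanishingRank (shorten S) Z := by
  have hzero : lastRank (S ⊓ vanishingOn 𝕜 {Fin.last n}) = 0 := by
    simp [lastRank, mem_vanishingOn]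
  have hinsert : vanishingOn 𝕜 (insert (Fin.last n) (Fin.castSucc '' Z)) =
      vanishingOn 𝕜 {Fin.last n} ⊓ vanishingOn 𝕜 (Fin.castSucc '' Z) := by
    ext c
    simp [mem_vanishingOn]
  rw [shorten, ← add_zero (vanishingRank (puncture _) Z), ← hzero, ← vanishingRank_castSucc_image,
    vanishingRank, vanishingRank, hinsert, inf_assoc]

lemma shorten_le_puncture : shorten S ≤ puncture S :=
  Submodule.map_mono inf_le_left

lemma shorten_eq_puncture_of_single_mem (hS : Pi.single (Fin.last n) 1 ∈ S) :
    shorten S = puncture S := by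
  refine shorten_le_puncture.antisymm fun c hc => ?_
  obtain ⟨d, hd, rfl⟩ := mem_puncture.1 hc
  refine mem_shorten.2 ⟨d - d (Fin.last n) • Pi.single (Fin.last n) 1,
    S.sub_mem hd (S.smul_mem _ hS), by simp, ?_⟩
  ext i
  simp

lemma shorten_eq_puncture_of_last_eq_zero (hS : ∀ c ∈ S, c (Fin.last n) = 0) :
    shorten S = puncture S := by
  rw [shorten, inf_eq_left.2 fun c hc => mem_vanishingOn.2 (by simpa using hS c hc)]

end LastCoordinate

/-! ### Reorientation of vectors -/

section Reorient

variable {𝕜 V : Type*} [Ring 𝕜] [AddCommGroup V] {n : ℕ}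

lemma reorient_reorient (v : Fin n → V) (A : Finset (Fin n)) :
    reorient (reorient v A) A = v := by
  ext i
  by_cases hi : i ∈ A <;> simp [reorient, hi]

lemma reorient_apply_eq_zero {v : Fin n → V} {A : Finset (Fin n)} {i : Fin n} :
    reorient v A i = 0 ↔ v i = 0 := by
  by_cases hi : i ∈ A <;> simp [reorient, hi]

lemma reorient_map_comp_castSucc (v : Fin (n + 1) → V) (A : Finset (Fin n)) :
    reorient v (A.map Fin.castSuccEmb) ∘ Fin.castSucc = reorient (v ∘ Fin.castSucc) A := by
  ext i
  simp [reorient]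

lemma reorient_insert_last_comp_castSucc (v : Fin (n + 1) → V) (A : Finset (Fin n)) :
    reorient v (insert (Fin.last n) (A.map Fin.castSuccEmb)) ∘ Fin.castSucc =
      reorient (v ∘ Fin.castSucc) A := by
  ext i
  simp [reorient]

lemma reorient_smul_add_smul [Module 𝕜 V] (s t : 𝕜) (v w : Fin n → V) (A : Finset (Fin n)) :
    reorient (s • v + t • w) A = s • reorient v A + t • reorient w A := by
  ext i
  by_cases hi : i ∈ A <;> simp [reorient, hi, add_comm]

lemma reorient_dotProduct_reorient (c d : Fin n → 𝕜) (A : Finset (Fin n)) :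
    reorient c A ⬝ᵥ reorient d A = c ⬝ᵥ d := by
  refine Finset.sum_congr rfl fun i _ => ?_
  by_cases hi : i ∈ A <;> simp [reorient, hi]

end Reorient

/-! ### Active elements -/

section Activity

variable {𝕜 : Type*} [Field 𝕜] [LinearOrder 𝕜] {n : ℕ}

/-- The vector `c` is nonnegative, and its first nonzero coordinate is at `a`. -/
structure IsPositiveFrom (c : Fin n → 𝕜) (a : Fin n) : Prop where
  nonneg : 0 ≤ c
  pos : 0 < c a
  eq_zero : ∀ i < a, c i = 0

/-- The set of the first nonzero positions of the nonnegative vectors in the reorientation of `S`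
on `A`. It is the set of orientation-active elements for spaces of relations, and of dually
orientation-active elements for spaces of covectors. -/
def active (S : Submodule 𝕜 (Fin n → 𝕜)) (A : Finset (Fin n)) : Set (Fin n) :=
  {a | ∃ c ∈ S, IsPositiveFrom (reorient c A) a}

/-- The elements that become active for the reorientation on `A` in view of a vector of `S` whose
forgotten last coordinate lies in `T`. The choices `Ici 0`, `Iic 0`, `{0}` and `univ` of `T`
correspond to the two reorientations of the last element, to shortening and to puncturing. -/
def activeVia (S : Submodule 𝕜 (Fin (n + 1) → 𝕜)) (T : Set 𝕜) (A : Finset (Fin n)) :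
    Set (Fin n) :=
  {a | ∃ c ∈ S, c (Fin.last n) ∈ T ∧ IsPositiveFrom (reorient (c ∘ Fin.castSucc) A) a}

lemma isPositiveFrom_castSucc_iff {c : Fin (n + 1) → 𝕜} {a : Fin n} :
    IsPositiveFrom c a.castSucc ↔
      0 ≤ c (Fin.last n) ∧ IsPositiveFrom (c ∘ Fin.castSucc) a := by
  constructor
  · rintro ⟨hc, ha, hlt⟩
    exact ⟨hc _, fun i => hc _, ha, fun i hi => hlt _ hi⟩
  · rintro ⟨hlast, hc, ha, hlt⟩
    refine ⟨Fin.forall_fin_succ'.2 ⟨hc, hlast⟩, ha, Fin.forall_fin_succ'.2 ⟨hlt, fun h => ?_⟩⟩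
    exact absurd h (Fin.castSucc_lt_last a).not_gt

lemma castSucc_mem_active_map {S : Submodule 𝕜 (Fin (n + 1) → 𝕜)} {A : Finset (Fin n)}
    {a : Fin n} :
    a.castSucc ∈ active S (A.map Fin.castSuccEmb) ↔ a ∈ activeVia S (Ici 0) A := by
  simp only [active, activeVia, mem_ofPred_eq, isPositiveFrom_castSucc_iff,
    reorient_map_comp_castSucc]
  simp [reorient]

lemma castSucc_mem_active_insert_last [IsOrderedAddMonoid 𝕜]
    {S : Submodule 𝕜 (Fin (n + 1) → 𝕜)} {A : Finset (Fin n)} {a : Fin n} :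
    a.castSucc ∈ active S (insert (Fin.last n) (A.map Fin.castSuccEmb)) ↔
      a ∈ activeVia S (Iic 0) A := by
  simp only [active, activeVia, mem_ofPred_eq, isPositiveFrom_castSucc_iff,
    reorient_insert_last_comp_castSucc]
  simp [reorient]

lemma active_shorten (S : Submodule 𝕜 (Fin (n + 1) → 𝕜)) (A : Finset (Fin n)) :
    active (shorten S) A = activeVia S {0} A := by
  ext a
  simp [active, activeVia, mem_shorten, and_assoc]

lemma active_puncture (S : Submodule 𝕜 (Fin (n + 1) → 𝕜)) (A : Finset (Fin n)) :
    active (puncture S) A = activeVia S univ A := by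
  ext a
  simp [active, activeVia, mem_puncture]

lemma activeVia_mono {S : Submodule 𝕜 (Fin (n + 1) → 𝕜)} {T U : Set 𝕜} (hTU : T ⊆ U)
    (A : Finset (Fin n)) : activeVia S T A ⊆ activeVia S U A :=
  fun _ ⟨c, hc, hlast, hpos⟩ => ⟨c, hc, hTU hlast, hpos⟩

lemma activeVia_union (S : Submodule 𝕜 (Fin (n + 1) → 𝕜)) (T U : Set 𝕜) (A : Finset (Fin n)) :
    activeVia S (T ∪ U) A = activeVia S T A ∪ activeVia S U A := by
  ext a
  simp [activeVia, or_and_right, and_or_left, exists_or]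

lemma activeVia_eq_of_subset {S : Submodule 𝕜 (Fin (n + 1) → 𝕜)} {T U : Set 𝕜}
    {A : Finset (Fin n)} (hT : 0 ∈ T) (hU : 0 ∈ U) (hTU : T ∪ U = univ)
    (h : activeVia S T A ⊆ activeVia S {0} A) :
    activeVia S T A = activeVia S {0} A ∧ activeVia S U A = activeVia S univ A := by
  refine ⟨h.antisymm (activeVia_mono (singleton_subset_iff.2 hT) A), ?_⟩
  rw [← hTU, activeVia_union,
    union_eq_right.2 (h.trans (activeVia_mono (singleton_subset_iff.2 hU) A))]

variable [IsStrictOrderedRing 𝕜]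

lemma IsPositiveFrom.smul_add_smul {c d : Fin n → 𝕜} {a b : Fin n} (hc : IsPositiveFrom c a)
    (hd : IsPositiveFrom d b) (hab : a ≤ b) {s t : 𝕜} (hs : 0 < s) (ht : 0 < t) :
    IsPositiveFrom (s • c + t • d) a where
  nonneg := add_nonneg (smul_nonneg hs.le hc.nonneg) (smul_nonneg ht.le hd.nonneg)
  pos := add_pos_of_pos_of_nonneg (mul_pos hs hc.pos) (mul_nonneg ht.le (hd.nonneg a))
  eq_zero i hi := by simp [hc.eq_zero i hi, hd.eq_zero i (hi.trans_le hab)]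

lemma last_mem_active (S : Submodule 𝕜 (Fin (n + 1) → 𝕜)) (B : Finset (Fin (n + 1))) :
    Fin.last n ∈ active S B ↔ Pi.single (Fin.last n) 1 ∈ S := by
  constructor
  · rintro ⟨c, hc, -, hpos, hzero⟩
    have hcastSucc (i : Fin n) : c i.castSucc = 0 :=
      reorient_apply_eq_zero.1 (hzero _ (Fin.castSucc_lt_last i))
    have hlast : c (Fin.last n) ≠ 0 := reorient_apply_eq_zero.not.1 hpos.ne'
    rw [eq_smul_single_last hcastSucc] at hc
    exact (S.smul_mem_iff hlast).1 hc
  · intro hS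
    have hsmul : reorient (Pi.single (Fin.last n) (1 : 𝕜)) B =
        (if Fin.last n ∈ B then -1 else 1 : 𝕜) • Pi.single (Fin.last n) 1 := by
      ext i
      cases i using Fin.lastCases <;> simp [reorient]
    refine ⟨reorient (Pi.single (Fin.last n) 1) B, ?_, ?_⟩
    · rw [hsmul]
      exact S.smul_mem _ hS
    · rw [reorient_reorient]
      exact ⟨Pi.single_nonneg.2 zero_le_one, by simp, fun i hi => Pi.single_eq_of_ne hi.ne _⟩

/-- Eliminating the last coordinate between the two witnesses produces a vector of `S` that vanishes
there and is positive from the smaller of their first positions. -/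
lemma activeVia_Ici_subset_or_Iic_subset (S : Submodule 𝕜 (Fin (n + 1) → 𝕜)) (A : Finset (Fin n)) :
    activeVia S (Ici 0) A ⊆ activeVia S {0} A ∨ activeVia S (Iic 0) A ⊆ activeVia S {0} A := by
  by_contra! h
  obtain ⟨⟨a, ⟨c, hc, hclast, hca⟩, ha⟩, b, ⟨d, hd, hdlast, hdb⟩, hb⟩ :=
    h.imp not_subset.1 not_subset.1
  have hcpos : 0 < c (Fin.last n) :=
    lt_of_le_of_ne hclast fun h => ha ⟨c, hc, h.symm, hca⟩
  have hdpos : 0 < -d (Fin.last n) :=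
    neg_pos.2 <| lt_of_le_of_ne hdlast fun h => hb ⟨d, hd, h, hdb⟩
  set g := -d (Fin.last n) • c + c (Fin.last n) • d with hg
  have hgS : g ∈ S := S.add_mem (S.smul_mem _ hc) (S.smul_mem _ hd)
  have hglast : g (Fin.last n) ∈ ({0} : Set 𝕜) := by simp [hg, mul_comm]
  have hgreorient : reorient (g ∘ Fin.castSucc) A =
      -d (Fin.last n) • reorient (c ∘ Fin.castSucc) A +
        c (Fin.last n) • reorient (d ∘ Fin.castSucc) A :=
    reorient_smul_add_smul _ _ (c ∘ Fin.castSucc) (d ∘ Fin.castSucc) A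
  rcases le_total a b with hab | hba
  · exact ha ⟨g, hgS, hglast, hgreorient ▸ hca.smul_add_smul hdb hab hdpos hcpos⟩
  · refine hb ⟨g, hgS, hglast, ?_⟩
    rw [hgreorient, add_comm]
    exact hdb.smul_add_smul hca hba hcpos hdpos

end Activity

/-! ### Orthogonal pairs -/

section Orthogonal

variable {𝕜 : Type*} [Field 𝕜] {n : ℕ}

/-- Every vector of `K` is orthogonal to every vector of `L` for the standard dot product. A pair of
orthogonal subspaces plays the role of an oriented matroid perspective `M → M'`: the supports of the
vectors of `K` are unions of circuits of `M`, those of `L` are unions of cocircuits of `M'`. -/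
def DotOrthogonal (K L : Submodule 𝕜 (Fin n → 𝕜)) : Prop :=
  ∀ c ∈ K, ∀ d ∈ L, c ⬝ᵥ d = 0

lemma DotOrthogonal.symm {K L : Submodule 𝕜 (Fin n → 𝕜)} (h : DotOrthogonal K L) :
    DotOrthogonal L K :=
  fun d hd c hc => (dotProduct_comm d c).trans (h c hc d hd)

variable {K L : Submodule 𝕜 (Fin (n + 1) → 𝕜)}

lemma dotProduct_eq_castSucc_add_last (c d : Fin (n + 1) → 𝕜) :
    c ⬝ᵥ d = (c ∘ Fin.castSucc) ⬝ᵥ (d ∘ Fin.castSucc) + c (Fin.last n) * d (Fin.last n) :=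
  Fin.sum_univ_castSucc _

lemma DotOrthogonal.shorten_puncture (h : DotOrthogonal K L) :
    DotOrthogonal (shorten K) (puncture L) := by
  intro c hc d hd
  obtain ⟨c, hcK, hlast, rfl⟩ := mem_shorten.1 hc
  obtain ⟨d, hdL, rfl⟩ := mem_puncture.1 hd
  simpa [dotProduct_eq_castSucc_add_last, hlast] using h c hcK d hdL

lemma DotOrthogonal.last_eq_zero (h : DotOrthogonal K L) (hL : Pi.single (Fin.last n) 1 ∈ L)
    {c : Fin (n + 1) → 𝕜} (hc : c ∈ K) : c (Fin.last n) = 0 := by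
  simpa using h c hc _ hL

lemma DotOrthogonal.lastRank_eq_and_shorten_eq_of_single_mem (h : DotOrthogonal K L)
    (hK : Pi.single (Fin.last n) 1 ∈ K) :
    lastRank K = 1 ∧ lastRank L = 0 ∧ shorten K = puncture K ∧ shorten L = puncture L := by
  have hlast : ∀ d ∈ L, d (Fin.last n) = 0 := fun d hd => h.symm.last_eq_zero hK hd
  refine ⟨if_pos hK, if_neg fun hL => ?_, shorten_eq_puncture_of_single_mem hK,
    shorten_eq_puncture_of_last_eq_zero hlast⟩
  simpa using hlast _ hL

variable [LinearOrder 𝕜] [IsStrictOrderedRing 𝕜]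

/-- Witnesses whose last coordinates have the same strict sign have a positive dot product. -/
lemma DotOrthogonal.activeVia_subset_or (h : DotOrthogonal K L) (A : Finset (Fin n)) (T : Set 𝕜)
    (hT : ∀ s ∈ T, ∀ t ∈ T, 0 ≤ s * t) :
    activeVia K T A ⊆ activeVia K {0} A ∨ activeVia L T A ⊆ activeVia L {0} A := by
  by_contra! hsub
  obtain ⟨⟨a, ⟨c, hc, hcT, hca⟩, ha⟩, b, ⟨d, hd, hdT, hdb⟩, hb⟩ :=
    hsub.imp not_subset.1 not_subset.1
  have hclast : c (Fin.last n) ≠ 0 := fun h0 => ha ⟨c, hc, h0, hca⟩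
  have hdlast : d (Fin.last n) ≠ 0 := fun h0 => hb ⟨d, hd, h0, hdb⟩
  have hcastSucc : 0 ≤ (c ∘ Fin.castSucc) ⬝ᵥ (d ∘ Fin.castSucc) := by
    rw [← reorient_dotProduct_reorient _ _ A]
    exact dotProduct_nonneg_of_nonneg hca.nonneg hdb.nonneg
  have hlast : 0 < c (Fin.last n) * d (Fin.last n) :=
    (hT _ hcT _ hdT).lt_of_ne' (mul_ne_zero hclast hdlast)
  have hdot := h c hc d hd
  rw [dotProduct_eq_castSucc_add_last] at hdot
  exact (add_pos_of_nonneg_of_pos hcastSucc hlast).ne' hdot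

lemma DotOrthogonal.activeVia_eq_or (h : DotOrthogonal K L) (A : Finset (Fin n)) :
    ((activeVia K (Ici 0) A = active (shorten K) A ∧
        activeVia K (Iic 0) A = active (puncture K) A) ∧
      activeVia L (Iic 0) A = active (shorten L) A ∧
        activeVia L (Ici 0) A = active (puncture L) A) ∨
    ((activeVia K (Iic 0) A = active (shorten K) A ∧
        activeVia K (Ici 0) A = active (puncture K) A) ∧
      activeVia L (Ici 0) A = active (shorten L) A ∧
        activeVia L (Iic 0) A = active (puncture L) A) := by
  simp only [active_shorten, active_puncture]
  have hK := activeVia_Ici_subset_or_Iic_subset K A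
  have hL := activeVia_Ici_subset_or_Iic_subset L A
  have hIci := h.activeVia_subset_or A (Ici 0) fun s hs t ht => mul_nonneg hs ht
  have hIic := h.activeVia_subset_or A (Iic 0) fun s hs t ht => mul_nonneg_of_nonpos_of_nonpos hs ht
  have hcases : (activeVia K (Ici 0) A ⊆ activeVia K {0} A ∧
        activeVia L (Iic 0) A ⊆ activeVia L {0} A) ∨
      (activeVia K (Iic 0) A ⊆ activeVia K {0} A ∧
        activeVia L (Ici 0) A ⊆ activeVia L {0} A) := by
    tauto
  have hzero_Ici : (0 : 𝕜) ∈ Ici 0 := self_mem_Ici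
  have hzero_Iic : (0 : 𝕜) ∈ Iic 0 := self_mem_Iic
  have hunion : Ici (0 : 𝕜) ∪ Iic 0 = univ := by rw [union_comm, Iic_union_Ici]
  exact hcases.imp
    (And.imp (activeVia_eq_of_subset hzero_Ici hzero_Iic hunion)
      (activeVia_eq_of_subset hzero_Iic hzero_Ici Iic_union_Ici))
    (And.imp (activeVia_eq_of_subset hzero_Iic hzero_Ici Iic_union_Ici)
      (activeVia_eq_of_subset hzero_Ici hzero_Iic hunion))

end Orthogonal

/-! ### The activity expansion -/

section Expansion

variable {𝕜 R : Type*} [Field 𝕜] {n : ℕ}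

open Classical in
/-- The contribution `x ^ #(P \ A) * u ^ #(P ∩ A)` of a set `P` of active elements to the generating
function of activities, written as a product over elements to make it multiplicative. -/
noncomputable def activityMonomial [CommMonoid R] (P : Set (Fin n)) (A : Finset (Fin n))
    (x u : R) : R :=
  ∏ a, if a ∈ P then if a ∈ A then u else x else 1

/-- The generating function `∑ A, X ^ corank A * Y ^ nullity A` of an orthogonal pair, where the
nullity is taken with respect to the relations `K` and the corank with respect to the
covectors `L`. -/
noncomputable def corankNullity [CommSemiring R] (K L : Submodule 𝕜 (Fin n → 𝕜)) (X Y : R) : R :=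
  ∑ A : Finset (Fin n), X ^ vanishingRank L A * Y ^ vanishingRank K (↑A)ᶜ

lemma sum_finset_fin_succ {M : Type*} [AddCommMonoid M] (g : Finset (Fin (n + 1)) → M) :
    ∑ A, g A = ∑ A : Finset (Fin n),
      (g (A.map Fin.castSuccEmb) + g (insert (Fin.last n) (A.map Fin.castSuccEmb))) := by
  rw [← Finset.powerset_univ, Fin.univ_castSuccEmb, Finset.cons_eq_insert,
    Finset.sum_powerset_insert (by simp), ← Finset.sum_add_distrib]
  refine (Finset.sum_bij (fun A _ => A.map Fin.castSuccEmb) (fun A _ => ?_)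
    (fun A _ B _ hAB => Finset.map_injective _ hAB) (fun B hB => ?_) fun A _ => rfl).symm
  · exact Finset.mem_powerset.2 (Finset.map_subset_map.2 (Finset.subset_univ A))
  · obtain ⟨A, -, rfl⟩ := Finset.subset_map_iff.1 (Finset.mem_powerset.1 hB)
    exact ⟨A, Finset.mem_univ A, rfl⟩

lemma activityMonomial_eq_pow [CommMonoid R] (P : Set (Fin n)) (A : Finset (Fin n)) (x u : R) :
    activityMonomial P A x u = x ^ {a | a ∉ A ∧ a ∈ P}.ncard * u ^ {a | a ∈ A ∧ a ∈ P}.ncard := by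
  classical
  simp only [activityMonomial, Finset.prod_ite, Finset.prod_const, one_pow, mul_one,
    Finset.filter_filter, ncard_eq_toFinset_card', toFinset_ofPred, and_comm]
  exact mul_comm _ _

lemma activityMonomial_active_map [CommMonoid R] [LinearOrder 𝕜] [IsStrictOrderedRing 𝕜]
    (S : Submodule 𝕜 (Fin (n + 1) → 𝕜)) (A : Finset (Fin n)) (x u : R) :
    activityMonomial (active S (A.map Fin.castSuccEmb)) (A.map Fin.castSuccEmb) x u =
      activityMonomial (activeVia S (Ici 0) A) A x u * x ^ lastRank S := by
  classical
  rw [activityMonomial, activityMonomial, Fin.prod_univ_castSucc]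
  by_cases hS : Pi.single (Fin.last n) 1 ∈ S <;>
    simp [castSucc_mem_active_map, last_mem_active, lastRank, hS]

lemma activityMonomial_active_insert_last [CommMonoid R] [LinearOrder 𝕜] [IsStrictOrderedRing 𝕜]
    (S : Submodule 𝕜 (Fin (n + 1) → 𝕜)) (A : Finset (Fin n)) (x u : R) :
    activityMonomial (active S (insert (Fin.last n) (A.map Fin.castSuccEmb)))
        (insert (Fin.last n) (A.map Fin.castSuccEmb)) x u =
      activityMonomial (activeVia S (Iic 0) A) A x u * u ^ lastRank S := by
  classical
  rw [activityMonomial, activityMonomial, Fin.prod_univ_castSucc]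
  by_cases hS : Pi.single (Fin.last n) 1 ∈ S <;>
    simp [castSucc_mem_active_insert_last, last_mem_active, lastRank, hS]

lemma corankNullity_succ [CommSemiring R] (K L : Submodule 𝕜 (Fin (n + 1) → 𝕜)) (X Y : R) :
    corankNullity K L X Y =
      X ^ lastRank L * corankNullity (shorten K) (puncture L) X Y +
        Y ^ lastRank K * corankNullity (puncture K) (shorten L) X Y := by
  have hcompl_map (A : Finset (Fin n)) : ((A.map Fin.castSuccEmb : Finset (Fin (n + 1))) : Set _)ᶜ =
      insert (Fin.last n) (Fin.castSucc '' (A : Set (Fin n))ᶜ) := by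
    ext i
    cases i using Fin.lastCases <;> simp
  have hcompl_insert (A : Finset (Fin n)) :
      (insert (Fin.last n) (Fin.castSucc '' (A : Set (Fin n))))ᶜ =
      Fin.castSucc '' (A : Set (Fin n))ᶜ := by
    ext i
    cases i using Fin.lastCases <;> simp
  simp only [corankNullity, Finset.mul_sum, ← Finset.sum_add_distrib]
  rw [sum_finset_fin_succ]
  refine Finset.sum_congr rfl fun A _ => ?_
  rw [hcompl_map, Finset.coe_insert, Finset.coe_map, Fin.coe_castSuccEmb, hcompl_insert]
  simp only [vanishingRank_insert_last, vanishingRank_castSucc_image]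
  ring

variable [CommRing R] [LinearOrder 𝕜] [IsStrictOrderedRing 𝕜]

lemma DotOrthogonal.activityMonomial_reorient_last_add {K L : Submodule 𝕜 (Fin (n + 1) → 𝕜)}
    (h : DotOrthogonal K L) (A : Finset (Fin n)) (x u y s : R) :
    activityMonomial (activeVia L (Ici 0) A) A x u * x ^ lastRank L *
          (activityMonomial (activeVia K (Ici 0) A) A y s * y ^ lastRank K) +
        activityMonomial (activeVia L (Iic 0) A) A x u * u ^ lastRank L *
          (activityMonomial (activeVia K (Iic 0) A) A y s * s ^ lastRank K) =
      (x + u - 1) ^ lastRank L * (activityMonomial (active (puncture L) A) A x u *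
          activityMonomial (active (shorten K) A) A y s) +
        (y + s - 1) ^ lastRank K * (activityMonomial (active (shorten L) A) A x u *
          activityMonomial (active (puncture K) A) A y s) := by
  by_cases hL : Pi.single (Fin.last n) 1 ∈ L
  · obtain ⟨hrankL, hrankK, heqL, heqK⟩ := h.symm.lastRank_eq_and_shorten_eq_of_single_mem hL
    rcases h.activeVia_eq_or A with hA | hA <;> simp only [hA, hrankL, hrankK, heqL, heqK] <;> ring
  by_cases hK : Pi.single (Fin.last n) 1 ∈ K
  · obtain ⟨hrankK, hrankL, heqK, heqL⟩ := h.lastRank_eq_and_shorten_eq_of_single_mem hK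
    rcases h.activeVia_eq_or A with hA | hA <;> simp only [hA, hrankL, hrankK, heqL, heqK] <;> ring
  · rcases h.activeVia_eq_or A with hA | hA <;> simp only [hA, lastRank, if_neg hL, if_neg hK] <;>
      ring

theorem DotOrthogonal.corankNullity_eq_sum_activityMonomial {n : ℕ}
    {K L : Submodule 𝕜 (Fin n → 𝕜)} (h : DotOrthogonal K L) (x u y s : R) :
    corankNullity K L (x + u - 1) (y + s - 1) =
      ∑ A, activityMonomial (active L A) A x u * activityMonomial (active K A) A y s := by
  induction n with
  | zero =>
    simp [corankNullity, activityMonomial, vanishingRank, Module.finrank_zero_of_subsingleton]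
  | succ n ih =>
    rw [corankNullity_succ, ih h.shorten_puncture, ih h.symm.shorten_puncture.symm,
      sum_finset_fin_succ, Finset.mul_sum, Finset.mul_sum, ← Finset.sum_add_distrib]
    refine Finset.sum_congr rfl fun A _ => ?_
    simp only [activityMonomial_active_map, activityMonomial_active_insert_last]
    exact (h.activityMonomial_reorient_last_add A x u y s).symm

end Expansion

/-! ### Vector configurations -/

section Configuration

variable {n : ℕ} {V W : Type*} [AddCommGroup V] [Module ℝ V] [AddCommGroup W] [Module ℝ W]

lemma oActive_reorient_iff (v : Fin n → V) (A : Finset (Fin n)) (a : Fin n) :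
    OActive (reorient v A) a ↔ a ∈ active (relations ℝ v) A := by
  have hsum (c : Fin n → ℝ) : ∑ i, c i • reorient v A i = ∑ i, reorient c A i • v i := by
    refine Finset.sum_congr rfl fun i _ => ?_
    by_cases hi : i ∈ A <;> simp [reorient, hi]
  constructor
  · rintro ⟨c, hnonneg, hrel, hpos, hzero⟩
    refine ⟨reorient c A, mem_relations.2 ((hsum c).symm.trans hrel), ?_⟩
    rw [reorient_reorient]
    exact ⟨hnonneg, hpos, hzero⟩
  · rintro ⟨c, hrel, hnonneg, hpos, hzero⟩
    refine ⟨reorient c A, hnonneg, ?_, hpos, hzero⟩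
    rw [hsum, reorient_reorient]
    exact mem_relations.1 hrel

lemma oDualActive_reorient_iff (v : Fin n → V) (A : Finset (Fin n)) (a : Fin n) :
    ODualActive (reorient v A) a ↔ a ∈ active (covectors ℝ v) A := by
  have hmap (f : V →ₗ[ℝ] ℝ) : reorient (f ∘ v) A = f ∘ reorient v A := by
    ext i
    by_cases hi : i ∈ A <;> simp [reorient, hi]
  constructor
  · rintro ⟨f, hnonneg, hpos, hzero⟩
    refine ⟨f ∘ v, mem_covectors.2 ⟨f, rfl⟩, ?_⟩
    rw [hmap]
    exact ⟨hnonneg, hpos, hzero⟩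
  · rintro ⟨_, hc, hpositive⟩
    obtain ⟨f, rfl⟩ := mem_covectors.1 hc
    rw [hmap] at hpositive
    exact ⟨f, hpositive.nonneg, hpositive.pos, hpositive.eq_zero⟩

lemma dotOrthogonal_relations_covectors {𝕜 V W : Type*} [Field 𝕜] [AddCommGroup V] [Module 𝕜 V]
    [AddCommGroup W] [Module 𝕜 W] (v : Fin n → V) (π : V →ₗ[𝕜] W) :
    DotOrthogonal (relations 𝕜 v) (covectors 𝕜 (π ∘ v)) := by
  intro c hc d hd
  obtain ⟨f, rfl⟩ := mem_covectors.1 hd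
  simpa [dotProduct] using congrArg (f ∘ₗ π) (mem_relations.1 hc)

lemma tuttePerspV_eq_corankNullity (v : Fin n → V) (v' : Fin n → W) (x y : ℝ) :
    tuttePerspV v v' x y = corankNullity (relations ℝ v) (covectors ℝ v') (x - 1) (y - 1) := by
  refine Finset.sum_congr rfl fun A _ => ?_
  have hcorank := finrank_span_add_vanishingRank_covectors (𝕜 := ℝ) v' A
  have hnullity := finrank_span_add_vanishingRank_relations (𝕜 := ℝ) v A
  rw [← image_univ] at hcorank
  rw [vrank, vrank, vrank, ← hcorank, ← hnullity, Nat.add_sub_cancel_left,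
    Nat.add_sub_cancel_left]

theorem tuttePerspV_add_add (v : Fin n → V) (π : V →ₗ[ℝ] W) (x u y s : ℝ) :
    tuttePerspV v (π ∘ v) (x + u) (y + s) = ∑ A : Finset (Fin n),
      x ^ thetaStar (π ∘ v) A * u ^ thetaStarBar (π ∘ v) A *
        (y ^ theta v A * s ^ thetaBar v A) := by
  rw [tuttePerspV_eq_corankNullity,
    (dotOrthogonal_relations_covectors v π).corankNullity_eq_sum_activityMonomial]
  simp only [activityMonomial_eq_pow, ← oActive_reorient_iff, ← oDualActive_reorient_iff,
    thetaStar, thetaStarBar, theta, thetaBar]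

end Configuration

/-! ### Mixed derivatives of polynomials centred at a point -/

section Derivative

variable {𝕜 ι : Type*} [NontriviallyNormedField 𝕜]

lemma iteratedDeriv_sum_mul_sub_pow (I : Finset ι) (k : ι → 𝕜) (m : ι → ℕ) (p : ℕ) (x : 𝕜) :
    iteratedDeriv p (fun x' => ∑ i ∈ I, k i * (x' - x) ^ m i) x =
      p.factorial * ∑ i ∈ I with m i = p, k i := by
  rw [iteratedDeriv_fun_sum (fun i _ => by fun_prop), Finset.sum_filter, Finset.mul_sum]
  refine Finset.sum_congr rfl fun i _ => ?_
  rw [iteratedDeriv_const_mul_field, iteratedDeriv_comp_sub_const p (fun z : 𝕜 => z ^ m i) x]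
  simp only [sub_self, iteratedDeriv_fun_pow_zero]
  by_cases hi : m i = p
  · simp [hi, mul_comm]
  · simp [hi, Ne.symm hi]

lemma iteratedDeriv_iteratedDeriv_sum_mul_sub_pow (I : Finset ι) (k : ι → 𝕜) (m l : ι → ℕ)
    (p q : ℕ) (x y : 𝕜) :
    iteratedDeriv p (fun x' => iteratedDeriv q
        (fun y' => ∑ i ∈ I, k i * (x' - x) ^ m i * (y' - y) ^ l i) y) x =
      p.factorial * q.factorial * ∑ i ∈ I with m i = p ∧ l i = q, k i := by
  have hinner (x' : 𝕜) : iteratedDeriv q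
      (fun y' => ∑ i ∈ I, k i * (x' - x) ^ m i * (y' - y) ^ l i) y =
      ∑ i ∈ I with l i = q, q.factorial * k i * (x' - x) ^ m i := by
    rw [iteratedDeriv_sum_mul_sub_pow, Finset.mul_sum]
    simp only [mul_assoc]
  simp only [hinner]
  rw [iteratedDeriv_sum_mul_sub_pow, Finset.filter_filter, ← Finset.mul_sum, mul_assoc]
  simp only [and_comm]

end Derivative

theorem statement16_general {n : ℕ} {V W : Type*} [AddCommGroup V] [Module ℝ V]
    [AddCommGroup W] [Module ℝ W] (v : Fin n → V) (π : V →ₗ[ℝ] W) (p q : ℕ) (x y : ℝ) :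
    iteratedDeriv p (fun x' => iteratedDeriv q (fun y' => tuttePerspV v (π ∘ v) x' y') y) x =
      (p.factorial : ℝ) * (q.factorial : ℝ) *
        ∑ A ∈ Finset.univ.filter
          (fun A : Finset (Fin n) => thetaStarBar (π ∘ v) A = p ∧ thetaBar v A = q),
          x ^ thetaStar (π ∘ v) A * y ^ theta v A := by
  have htaylor (x' y' : ℝ) : tuttePerspV v (π ∘ v) x' y' = ∑ A : Finset (Fin n),
      x ^ thetaStar (π ∘ v) A * y ^ theta v A * (x' - x) ^ thetaStarBar (π ∘ v) A *
        (y' - y) ^ thetaBar v A := by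
    rw [← add_sub_cancel x x', ← add_sub_cancel y y', tuttePerspV_add_add]
    simp only [add_sub_cancel, mul_assoc, mul_left_comm]
  simp only [htaylor]
  exact iteratedDeriv_iteratedDeriv_sum_mul_sub_pow ..

/-- the iterated partial derivative `∂^{p+q} t / ∂x^p ∂y^q` of the two-variable
polynomial `t(M,M';x,y,1)` is the generating function
`p! · q! · ∑_{θ̄*_{M'}(A) = p, θ̄_M(A) = q} x^θ*_{M'}(A) y^θ_M(A)`. -/
theorem statement16 {n : ℕ} {V W : Type*} [AddCommGroup V] [Module ℝ V] [FiniteDimensional ℝ V]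
    [AddCommGroup W] [Module ℝ W] [FiniteDimensional ℝ W]
    (v : Fin n → V) (π : V →ₗ[ℝ] W) (p q : ℕ) (x y : ℝ) :
    iteratedDeriv p (fun x' => iteratedDeriv q (fun y' => tuttePerspV v (π ∘ v) x' y') y) x =
      (p.factorial : ℝ) * (q.factorial : ℝ) *
        ∑ A ∈ Finset.univ.filter
          (fun A : Finset (Fin n) => thetaStarBar (π ∘ v) A = p ∧ thetaBar v A = q),
          x ^ thetaStar (π ∘ v) A * y ^ theta v A :=
  statement16_general v π p q x y
end

section
/- (Deletion/contraction dichotomy for pointwise orientation activities, realizable case.) Let n ≥ 1, let e be the greatest element of Fin n, let v : Fin n → V be a vector configuration, π : V →ₗ[ℝ] W a linear map, and v' = π ∘ v. Then at least one of the following holds: (i) for every a ≠ e: [a is dually active for v' iff a is dually active for v'\e], [a is active for v iff a is active for v\e], [a is dually active for -_e v' iff a is dually active for v'/e], and [a is active for -_e v iff a is active for v/e]; or (ii) for every a ≠ e: [a is dually active for v' iff a is dually active for v'/e], [a is active for v iff a is active for v/e], [a is dually active for -_e v' iff a is dually active for v'\e], and [a is active for -_e v iff a is active for v\e]. -/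
open Set Submodule

/-- `a` is active for the configuration `w` on the finite linearly ordered index set `I`:
`a` is the smallest element of a positive circuit, i.e. there is a nonnegative linear
dependence with positive coefficient at `a` and zero coefficients below `a`. -/
def ActiveI {I : Type*} [Fintype I] [LinearOrder I] {U : Type*} [AddCommGroup U] [Module ℝ U]
    (w : I → U) (a : I) : Prop :=
  ∃ c : I → ℝ, (∀ i, 0 ≤ c i) ∧ (∑ i, c i • w i) = 0 ∧ 0 < c a ∧ ∀ i < a, c i = 0

/-- `a` is dually active for the configuration `w`: `a` is the smallest element of a positive
cocircuit, i.e. there is a linear functional, nonnegative on the configuration, positive at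
`w a` and vanishing on the vectors below `a`. -/
def DualActiveI {I : Type*} [Fintype I] [LinearOrder I] {U : Type*} [AddCommGroup U] [Module ℝ U]
    (w : I → U) (a : I) : Prop :=
  ∃ f : U →ₗ[ℝ] ℝ, (∀ i, 0 ≤ f (w i)) ∧ 0 < f (w a) ∧ ∀ i < a, f (w i) = 0

/-- The reorientation of the configuration `w` at the single element `e`. -/
def reorientAt {I : Type*} [DecidableEq I] {U : Type*} [AddCommGroup U]
    (w : I → U) (e : I) : I → U :=
  fun i => if i = e then -w i else w i

/-!
An activity of `w`, of its reorientation at `e`, of its deletion or of its contraction at `e` is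
always witnessed by a vector of one and the same subspace `L` of `I → ℝ` (linear dependences, or
values of functionals) that is nonnegative off `e`; only the condition on the `e`-coordinate
changes, to `≥ 0`, `≤ 0`, `= 0` or none.

Cancelling the `e`-coordinates of two witnesses of opposite signs gives a witness with
`e`-coordinate `0` for the smaller of the two indices. Hence the condition `= 0` is equivalent to
`≥ 0` and `≤ 0` both being achievable, possibly by different vectors, and one of the latter two
implies the other, uniformly in the index. The choice of implication for dependences of `v` and for
functionals on `π ∘ v` can be made in opposite directions, because strict witnesses with
`e`-coordinates of the same sign would have positive inner product, whereas a dependence is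
orthogonal to the values of a functional.
-/

section ActiveSet

variable {I 𝕜 : Type*} [LinearOrder I] [CommRing 𝕜] [LinearOrder 𝕜]
  {L M : Submodule 𝕜 (I → 𝕜)} {e a b : I} {S T : Set 𝕜}

/-- The indices that are smallest in the support of some vector of `L` which is positive there,
nonnegative off `e`, and whose `e`-coordinate lies in `S`. Varying `S` captures activity in a
configuration, in its reorientation at `e`, and in its two minors at `e`. -/
def activeSet (L : Submodule 𝕜 (I → 𝕜)) (e : I) (S : Set 𝕜) : Set I :=
  {a | ∃ c ∈ L, (∀ i ≠ e, 0 ≤ c i) ∧ 0 < c a ∧ (∀ i < a, c i = 0) ∧ c e ∈ S}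

theorem activeSet_mono (h : S ⊆ T) : activeSet L e S ⊆ activeSet L e T :=
  fun _ ⟨c, hc, hnonneg, hpos, hbelow, hS⟩ => ⟨c, hc, hnonneg, hpos, hbelow, h hS⟩

theorem activeSet_union : activeSet L e (S ∪ T) = activeSet L e S ∪ activeSet L e T := by
  ext a
  simp only [activeSet, mem_union, mem_ofPred_eq, and_or_left, exists_or]

theorem activeSet_univ :
    activeSet L e univ = activeSet L e (Ici 0) ∪ activeSet L e (Iic 0) := by
  rw [← activeSet_union, union_comm, Iic_union_Ici]

theorem activeSet_Ici_diff_Iic_subset :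
    activeSet L e (Ici 0) \ activeSet L e (Iic 0) ⊆ activeSet L e (Ioi 0) := by
  rw [sdiff_subset_iff, ← activeSet_union]
  exact activeSet_mono ((subset_univ _).trans Iic_union_Ioi.ge)

theorem activeSet_Iic_diff_Ici_subset :
    activeSet L e (Iic 0) \ activeSet L e (Ici 0) ⊆ activeSet L e (Iio 0) := by
  rw [sdiff_subset_iff, ← activeSet_union, union_comm]
  exact activeSet_mono ((subset_univ _).trans Iio_union_Ici.ge)

theorem exists_mul_nonpos_of_orthogonal [Fintype I] [IsStrictOrderedRing 𝕜]
    (horth : ∀ c ∈ L, ∀ d ∈ M, c ⬝ᵥ d = 0)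
    (ha : a ∈ activeSet L e S) (hb : b ∈ activeSet M e T) : ∃ s ∈ S, ∃ t ∈ T, s * t ≤ 0 := by
  obtain ⟨c, hc, hc_nonneg, -, -, hcS⟩ := ha
  obtain ⟨d, hd, hd_nonneg, -, -, hdT⟩ := hb
  refine ⟨c e, hcS, d e, hdT, ?_⟩
  have hrest : 0 ≤ ∑ i ∈ Finset.univ.erase e, c i * d i := Finset.sum_nonneg fun i hi =>
    mul_nonneg (hc_nonneg i (Finset.ne_of_mem_erase hi)) (hd_nonneg i (Finset.ne_of_mem_erase hi))
  have hsum : c e * d e + ∑ i ∈ Finset.univ.erase e, c i * d i = 0 :=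
    (Finset.add_sum_erase _ _ (Finset.mem_univ e)).trans (horth c hc d hd)
  linarith

variable [IsStrictOrderedRing 𝕜]

theorem min_mem_activeSet_zero (ha : a ∈ activeSet L e (Ioi 0)) (hb : b ∈ activeSet L e (Iio 0)) :
    min a b ∈ activeSet L e {0} := by
  obtain ⟨c, hc, hc_nonneg, hca, hc_below, hce⟩ := ha
  obtain ⟨d, hd, hd_nonneg, hdb, hd_below, hde⟩ := hb
  rw [mem_Ioi] at hce
  rw [mem_Iio] at hde
  have hcoeff : 0 < -d e := neg_pos.2 hde
  refine ⟨-d e • c + c e • d, L.add_mem (L.smul_mem _ hc) (L.smul_mem _ hd), fun i hi => ?_, ?_,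
    fun i hi => ?_, ?_⟩
  · exact add_nonneg (mul_nonneg hcoeff.le (hc_nonneg i hi)) (mul_nonneg hce.le (hd_nonneg i hi))
  · simp only [Pi.add_apply, Pi.smul_apply, smul_eq_mul]
    rcases lt_trichotomy a b with hab | rfl | hba
    · simpa [min_eq_left hab.le, hd_below a hab] using mul_pos hcoeff hca
    · simpa using add_pos (mul_pos hcoeff hca) (mul_pos hce hdb)
    · simpa [min_eq_right hba.le, hc_below b hba] using mul_pos hce hdb
  · simp [hc_below i (lt_min_iff.1 hi).1, hd_below i (lt_min_iff.1 hi).2]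
  · simp [mul_comm]

theorem activeSet_zero :
    activeSet L e {0} = activeSet L e (Ici 0) ∩ activeSet L e (Iic 0) := by
  refine Subset.antisymm (subset_inter (activeSet_mono (by simp)) (activeSet_mono (by simp))) ?_
  rw [← Ioi_union_left, ← Iio_union_right, activeSet_union, activeSet_union]
  rintro a ⟨hpos | hzero, hneg | hzero⟩
  · simpa using min_mem_activeSet_zero hpos hneg
  all_goals assumption

theorem activeSet_Ici_Iic_subset_total :
    activeSet L e (Ici 0) ⊆ activeSet L e (Iic 0) ∨
      activeSet L e (Iic 0) ⊆ activeSet L e (Ici 0) := by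
  by_contra! h
  obtain ⟨⟨a, ha, ha'⟩, b, hb, hb'⟩ := h.imp not_subset.1 not_subset.1
  have hmin := min_mem_activeSet_zero (activeSet_Ici_diff_Iic_subset ⟨ha, ha'⟩)
    (activeSet_Iic_diff_Ici_subset ⟨hb, hb'⟩)
  rw [activeSet_zero] at hmin
  rcases min_choice a b with hab | hab <;> rw [hab] at hmin
  · exact ha' hmin.2
  · exact hb' hmin.1

theorem activeSet_dichotomy_of_orthogonal [Fintype I]
    (horth : ∀ c ∈ L, ∀ d ∈ M, c ⬝ᵥ d = 0) :
    (activeSet M e (Iic 0) ⊆ activeSet M e (Ici 0) ∧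
        activeSet L e (Ici 0) ⊆ activeSet L e (Iic 0)) ∨
      (activeSet M e (Ici 0) ⊆ activeSet M e (Iic 0) ∧
        activeSet L e (Iic 0) ⊆ activeSet L e (Ici 0)) := by
  have hpos : activeSet L e (Ici 0) ⊆ activeSet L e (Iic 0) ∨
      activeSet M e (Ici 0) ⊆ activeSet M e (Iic 0) := by
    by_contra! h
    obtain ⟨⟨a, ha⟩, b, hb⟩ := h.imp not_subset.1 not_subset.1
    obtain ⟨s, hs, t, ht, hst⟩ := exists_mul_nonpos_of_orthogonal horth
      (activeSet_Ici_diff_Iic_subset ha) (activeSet_Ici_diff_Iic_subset hb)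
    exact hst.not_gt (mul_pos hs ht)
  have hneg : activeSet L e (Iic 0) ⊆ activeSet L e (Ici 0) ∨
      activeSet M e (Iic 0) ⊆ activeSet M e (Ici 0) := by
    by_contra! h
    obtain ⟨⟨a, ha⟩, b, hb⟩ := h.imp not_subset.1 not_subset.1
    obtain ⟨s, hs, t, ht, hst⟩ := exists_mul_nonpos_of_orthogonal horth
      (activeSet_Iic_diff_Ici_subset ha) (activeSet_Iic_diff_Ici_subset hb)
    exact hst.not_gt (mul_pos_of_neg_of_neg hs ht)
  have hL := activeSet_Ici_Iic_subset_total (L := L) (e := e)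
  have hM := activeSet_Ici_Iic_subset_total (L := M) (e := e)
  tauto

end ActiveSet

section Configuration

variable {I R U : Type*}

/-- The deletion `w \ e` of a vector configuration. -/
def deletion (w : I → U) (e : I) : {b : I // b ≠ e} → U :=
  fun b => w b

variable (R) in
/-- The contraction `w / e` of a vector configuration. -/
def contraction [Ring R] [AddCommGroup U] [Module R U] (w : I → U) (e : I) :
    {b : I // b ≠ e} → U ⧸ span R {w e} :=
  fun b => (span R {w e}).mkQ (w b)

variable (R) in
/-- The space of linear dependences of a configuration; its sign vectors are the vectors of the
oriented matroid. -/
def dependenceSpace [Fintype I] [Semiring R] [AddCommMonoid U] [Module R U]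
    (w : I → U) : Submodule R (I → R) :=
  LinearMap.ker (Fintype.linearCombination R w)

variable (R) in
/-- The space of value vectors of linear functionals on a configuration; its sign vectors are the
covectors of the oriented matroid. -/
def covectorSpace [CommSemiring R] [AddCommMonoid U] [Module R U]
    (w : I → U) : Submodule R (I → R) :=
  LinearMap.range (LinearMap.pi fun i => Module.Dual.eval R U (w i))

theorem mem_dependenceSpace [Fintype I] [Semiring R] [AddCommMonoid U] [Module R U]
    {w : I → U} {c : I → R} : c ∈ dependenceSpace R w ↔ ∑ i, c i • w i = 0 :=
  Iff.rfl

theorem mem_covectorSpace [CommSemiring R] [AddCommMonoid U] [Module R U]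
    {w : I → U} {c : I → R} : c ∈ covectorSpace R w ↔ ∃ f : U →ₗ[R] R, ⇑f ∘ w = c :=
  Iff.rfl

theorem dotProduct_eq_zero_of_mem_dependenceSpace_of_mem_covectorSpace [Fintype I]
    [CommSemiring R] {V W : Type*} [AddCommMonoid V] [Module R V] [AddCommMonoid W] [Module R W]
    (v : I → V) (π : V →ₗ[R] W) {c d : I → R} (hc : c ∈ dependenceSpace R v)
    (hd : d ∈ covectorSpace R (π ∘ v)) : c ⬝ᵥ d = 0 := by
  obtain ⟨f, rfl⟩ := mem_covectorSpace.1 hd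
  simpa [dotProduct] using congrArg (f ∘ₗ π) (mem_dependenceSpace.1 hc)

theorem mkQ_span_singleton_eq_zero_iff [Ring R] [AddCommGroup U] [Module R U] {u x : U} :
    (span R {u}).mkQ x = 0 ↔ ∃ t : R, t • u + x = 0 := by
  rw [mkQ_apply, Submodule.Quotient.mk_eq_zero, mem_span_singleton]
  exact (Equiv.neg R).exists_congr fun t => by simp [neg_smul, neg_add_eq_zero, eq_comm]

end Configuration

section Reorientation

variable {I U : Type*} [DecidableEq I] [AddCommGroup U]

theorem reorientAt_self (w : I → U) (e : I) : reorientAt w e e = -w e :=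
  if_pos rfl

theorem reorientAt_of_ne (w : I → U) {e i : I} (hi : i ≠ e) : reorientAt w e i = w i :=
  if_neg hi

theorem reorientAt_eq_zero_iff {w : I → U} {e i : I} : reorientAt w e i = 0 ↔ w i = 0 := by
  by_cases hi : i = e <;> simp [reorientAt, hi]

theorem reorientAt_involutive (e : I) : Function.Involutive fun w : I → U => reorientAt w e := by
  intro w
  funext i
  by_cases hi : i = e <;> simp [reorientAt, hi]

theorem map_reorientAt_apply {U' : Type*} [AddCommGroup U'] (f : U →+ U') (w : I → U)
    (e i : I) : f (reorientAt w e i) = reorientAt (f ∘ w) e i := by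
  by_cases hi : i = e <;> simp [reorientAt, hi]

theorem reorientAt_smul_reorientAt {R : Type*} [Ring R] [Module R U] (c : I → R) (w : I → U)
    (e i : I) : reorientAt c e i • reorientAt w e i = c i • w i := by
  by_cases hi : i = e <;> simp [reorientAt, hi]

theorem forall_nonneg_reorientAt_iff [LE U] [AddLeftMono U] {c : I → U} {e : I} :
    (∀ i, 0 ≤ reorientAt c e i) ↔ c e ≤ 0 ∧ ∀ i ≠ e, 0 ≤ c i := by
  rw [← and_forall_ne e, reorientAt_self, neg_nonneg]
  simp +contextual only [reorientAt_of_ne, ne_eq, not_false_eq_true]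

end Reorientation

section Restriction

variable {I R U : Type*} [LinearOrder I] [CommRing R] [LinearOrder R] [AddCommGroup U]
  [Module R U] (w : I → U) {e : I} {S : Set R}

theorem mem_activeSet_dependenceSpace_iff_deletion [Fintype I] {a : {b : I // b ≠ e}}
    (ha : ↑a < e) :
    ↑a ∈ activeSet (dependenceSpace R w) e S ↔
      ∃ c : {b : I // b ≠ e} → R, (∀ b, 0 ≤ c b) ∧ 0 < c a ∧ (∀ b < a, c b = 0) ∧
        ∃ t ∈ S, t • w e + ∑ b, c b • deletion w e b = 0 := by
  constructor
  · rintro ⟨c, hdep, hnonneg, hpos, hbelow, he⟩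
    rw [mem_dependenceSpace, Fintype.sum_eq_add_sum_subtype_ne _ e] at hdep
    exact ⟨fun b => c b, fun b => hnonneg b b.2, hpos, fun b hb => hbelow b hb, c e, he, hdep⟩
  · rintro ⟨c, hnonneg, hpos, hbelow, t, ht, hdep⟩
    have hne : ∀ b : {b : I // b ≠ e}, (Equiv.funSplitAt e R).symm (t, c) b = c b := fun b => by
      simp [b.2]
    have heq : (Equiv.funSplitAt e R).symm (t, c) e = t := by simp
    refine ⟨(Equiv.funSplitAt e R).symm (t, c), ?_, fun i hi => ?_, ?_, fun i hi => ?_, ?_⟩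
    · rw [mem_dependenceSpace, Fintype.sum_eq_add_sum_subtype_ne _ e, heq]
      simpa only [hne, deletion] using hdep
    · exact (hnonneg ⟨i, hi⟩).trans_eq (hne ⟨i, hi⟩).symm
    · rwa [hne]
    · exact (hne ⟨i, (hi.trans ha).ne⟩).trans (hbelow _ hi)
    · rwa [heq]

theorem mem_activeSet_covectorSpace_iff {a : I} :
    a ∈ activeSet (covectorSpace R w) e S ↔ ∃ f : U →ₗ[R] R,
      (∀ i ≠ e, 0 ≤ f (w i)) ∧ 0 < f (w a) ∧ (∀ i < a, f (w i) = 0) ∧ f (w e) ∈ S := by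
  simp [activeSet, mem_covectorSpace]

theorem mem_activeSet_covectorSpace_iff_deletion {a : {b : I // b ≠ e}} (ha : ↑a < e) :
    ↑a ∈ activeSet (covectorSpace R w) e S ↔ ∃ f : U →ₗ[R] R,
      (∀ b, 0 ≤ f (deletion w e b)) ∧ 0 < f (deletion w e a) ∧
        (∀ b < a, f (deletion w e b) = 0) ∧ f (w e) ∈ S := by
  rw [mem_activeSet_covectorSpace_iff]
  refine exists_congr fun f => ?_
  have hbelow : (∀ i < ↑a, f (w i) = 0) ↔ ∀ b < a, f (deletion w e b) = 0 :=
    ⟨fun h b hb => h b hb, fun h i hi => h ⟨i, (hi.trans ha).ne⟩ hi⟩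
  have hnonneg : (∀ i ≠ e, 0 ≤ f (w i)) ↔ ∀ b, 0 ≤ f (deletion w e b) :=
    ⟨fun h b => h b b.2, fun h i hi => h ⟨i, hi⟩⟩
  rw [hbelow, hnonneg]
  rfl

end Restriction

section Activity

variable {I U : Type*} [Fintype I] [LinearOrder I] [AddCommGroup U] [Module ℝ U]
  (w : I → U) {e : I}

variable (e) in
theorem activeI_iff_mem_activeSet {a : I} :
    ActiveI w a ↔ a ∈ activeSet (dependenceSpace ℝ w) e (Ici 0) := by
  refine exists_congr fun c => ?_
  rw [← and_forall_ne e, mem_dependenceSpace, mem_Ici]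
  tauto

theorem activeI_reorientAt_iff_mem_activeSet {a : I} (ha : a ≠ e) :
    ActiveI (reorientAt w e) a ↔ a ∈ activeSet (dependenceSpace ℝ w) e (Iic 0) := by
  refine (reorientAt_involutive (U := ℝ) e).surjective.exists.trans (exists_congr fun c => ?_)
  simp only [forall_nonneg_reorientAt_iff, reorientAt_smul_reorientAt, reorientAt_of_ne c ha,
    reorientAt_eq_zero_iff, mem_dependenceSpace, mem_Iic]
  tauto

theorem activeI_deletion_iff_mem_activeSet {a : {b : I // b ≠ e}} (ha : ↑a < e) :
    ActiveI (deletion w e) a ↔ ↑a ∈ activeSet (dependenceSpace ℝ w) e {0} := by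
  rw [mem_activeSet_dependenceSpace_iff_deletion w ha]
  simp only [mem_singleton_iff, exists_eq_left, zero_smul, zero_add]
  exact exists_congr fun c => by tauto

theorem activeI_contraction_iff_mem_activeSet {a : {b : I // b ≠ e}} (ha : ↑a < e) :
    ActiveI (contraction ℝ w e) a ↔ ↑a ∈ activeSet (dependenceSpace ℝ w) e univ := by
  rw [mem_activeSet_dependenceSpace_iff_deletion w ha]
  have hsum : ∀ c : {b : I // b ≠ e} → ℝ, ∑ b, c b • contraction ℝ w e b = 0 ↔
      ∃ t : ℝ, t • w e + ∑ b, c b • deletion w e b = 0 := fun c => by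
    rw [← mkQ_span_singleton_eq_zero_iff, map_sum]
    simp only [map_smul]
    rfl
  simp only [mem_univ, true_and, ← hsum]
  exact exists_congr fun c => by tauto

variable (e) in
theorem dualActiveI_iff_mem_activeSet {a : I} :
    DualActiveI w a ↔ a ∈ activeSet (covectorSpace ℝ w) e (Ici 0) := by
  rw [mem_activeSet_covectorSpace_iff]
  refine exists_congr fun f => ?_
  rw [← and_forall_ne e]
  simp only [mem_Ici]
  tauto

theorem dualActiveI_reorientAt_iff_mem_activeSet {a : I} (ha : a ≠ e) :
    DualActiveI (reorientAt w e) a ↔ a ∈ activeSet (covectorSpace ℝ w) e (Iic 0) := by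
  rw [mem_activeSet_covectorSpace_iff]
  refine exists_congr fun f => ?_
  have hmap : ∀ i, f (reorientAt w e i) = reorientAt (f ∘ w) e i :=
    map_reorientAt_apply f.toAddMonoidHom w e
  simp only [hmap, forall_nonneg_reorientAt_iff, reorientAt_of_ne _ ha, reorientAt_eq_zero_iff,
    Function.comp_apply, mem_Iic]
  tauto

theorem dualActiveI_deletion_iff_mem_activeSet {a : {b : I // b ≠ e}} (ha : ↑a < e) :
    DualActiveI (deletion w e) a ↔ ↑a ∈ activeSet (covectorSpace ℝ w) e univ := by
  rw [mem_activeSet_covectorSpace_iff_deletion w ha]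
  simp only [mem_univ, and_true]
  rfl

theorem dualActiveI_contraction_iff_mem_activeSet {a : {b : I // b ≠ e}} (ha : ↑a < e) :
    DualActiveI (contraction ℝ w e) a ↔ ↑a ∈ activeSet (covectorSpace ℝ w) e {0} := by
  rw [mem_activeSet_covectorSpace_iff_deletion w ha]
  constructor
  · rintro ⟨g, hnonneg, hpos, hbelow⟩
    have he : (g ∘ₗ (span ℝ {w e}).mkQ) (w e) = 0 := by
      rw [LinearMap.comp_apply, mkQ_apply,
        (Submodule.Quotient.mk_eq_zero _).2 (mem_span_singleton_self _), map_zero]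
    exact ⟨g ∘ₗ (span ℝ {w e}).mkQ, hnonneg, hpos, hbelow, he⟩
  · rintro ⟨f, hnonneg, hpos, hbelow, he⟩
    exact ⟨liftQSpanSingleton (w e) f he, hnonneg, hpos, hbelow⟩

theorem activeI_iff_of_activeSet_Ici_subset
    (h : activeSet (dependenceSpace ℝ w) e (Ici 0) ⊆ activeSet (dependenceSpace ℝ w) e (Iic 0))
    {a : {b : I // b ≠ e}} (ha : ↑a < e) :
    (ActiveI w a ↔ ActiveI (deletion w e) a) ∧
      (ActiveI (reorientAt w e) a ↔ ActiveI (contraction ℝ w e) a) := by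
  rw [activeI_iff_mem_activeSet w e, activeI_reorientAt_iff_mem_activeSet w a.2,
    activeI_deletion_iff_mem_activeSet w ha, activeI_contraction_iff_mem_activeSet w ha,
    activeSet_zero, activeSet_univ, inter_eq_left.2 h, union_eq_right.2 h]
  exact ⟨Iff.rfl, Iff.rfl⟩

theorem activeI_iff_of_activeSet_Iic_subset
    (h : activeSet (dependenceSpace ℝ w) e (Iic 0) ⊆ activeSet (dependenceSpace ℝ w) e (Ici 0))
    {a : {b : I // b ≠ e}} (ha : ↑a < e) :
    (ActiveI w a ↔ ActiveI (contraction ℝ w e) a) ∧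
      (ActiveI (reorientAt w e) a ↔ ActiveI (deletion w e) a) := by
  rw [activeI_iff_mem_activeSet w e, activeI_reorientAt_iff_mem_activeSet w a.2,
    activeI_deletion_iff_mem_activeSet w ha, activeI_contraction_iff_mem_activeSet w ha,
    activeSet_zero, activeSet_univ, inter_eq_right.2 h, union_eq_left.2 h]
  exact ⟨Iff.rfl, Iff.rfl⟩

theorem dualActiveI_iff_of_activeSet_Iic_subset
    (h : activeSet (covectorSpace ℝ w) e (Iic 0) ⊆ activeSet (covectorSpace ℝ w) e (Ici 0))
    {a : {b : I // b ≠ e}} (ha : ↑a < e) :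
    (DualActiveI w a ↔ DualActiveI (deletion w e) a) ∧
      (DualActiveI (reorientAt w e) a ↔ DualActiveI (contraction ℝ w e) a) := by
  rw [dualActiveI_iff_mem_activeSet w e, dualActiveI_reorientAt_iff_mem_activeSet w a.2,
    dualActiveI_deletion_iff_mem_activeSet w ha, dualActiveI_contraction_iff_mem_activeSet w ha,
    activeSet_zero, activeSet_univ, inter_eq_right.2 h, union_eq_left.2 h]
  exact ⟨Iff.rfl, Iff.rfl⟩

theorem dualActiveI_iff_of_activeSet_Ici_subset
    (h : activeSet (covectorSpace ℝ w) e (Ici 0) ⊆ activeSet (covectorSpace ℝ w) e (Iic 0))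
    {a : {b : I // b ≠ e}} (ha : ↑a < e) :
    (DualActiveI w a ↔ DualActiveI (contraction ℝ w e) a) ∧
      (DualActiveI (reorientAt w e) a ↔ DualActiveI (deletion w e) a) := by
  rw [dualActiveI_iff_mem_activeSet w e, dualActiveI_reorientAt_iff_mem_activeSet w a.2,
    dualActiveI_deletion_iff_mem_activeSet w ha, dualActiveI_contraction_iff_mem_activeSet w ha,
    activeSet_zero, activeSet_univ, inter_eq_left.2 h, union_eq_right.2 h]
  exact ⟨Iff.rfl, Iff.rfl⟩

end Activity

theorem statement18_general {I V W : Type*} [Fintype I] [LinearOrder I] [AddCommGroup V]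
    [Module ℝ V] [AddCommGroup W] [Module ℝ W] {e : I} (he : IsTop e) (v : I → V)
    (π : V →ₗ[ℝ] W) :
    (∀ a : {a : I // a ≠ e},
      (DualActiveI (π ∘ v) ↑a ↔ DualActiveI (deletion (π ∘ v) e) a) ∧
      (ActiveI v ↑a ↔ ActiveI (deletion v e) a) ∧
      (DualActiveI (reorientAt (π ∘ v) e) ↑a ↔ DualActiveI (contraction ℝ (π ∘ v) e) a) ∧
      (ActiveI (reorientAt v e) ↑a ↔ ActiveI (contraction ℝ v e) a)) ∨
    (∀ a : {a : I // a ≠ e},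
      (DualActiveI (π ∘ v) ↑a ↔ DualActiveI (contraction ℝ (π ∘ v) e) a) ∧
      (ActiveI v ↑a ↔ ActiveI (contraction ℝ v e) a) ∧
      (DualActiveI (reorientAt (π ∘ v) e) ↑a ↔ DualActiveI (deletion (π ∘ v) e) a) ∧
      (ActiveI (reorientAt v e) ↑a ↔ ActiveI (deletion v e) a)) := by
  have hlt (a : {a : I // a ≠ e}) : ↑a < e := (he a).lt_of_ne a.2
  have horth : ∀ c ∈ dependenceSpace ℝ v, ∀ d ∈ covectorSpace ℝ (π ∘ v), c ⬝ᵥ d = 0 :=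
    fun _ hc _ hd => dotProduct_eq_zero_of_mem_dependenceSpace_of_mem_covectorSpace v π hc hd
  refine (activeSet_dichotomy_of_orthogonal (e := e) horth).imp ?_ ?_ <;> rintro ⟨hdual, hprimal⟩ a
  · obtain ⟨hdual_orig, hdual_reorient⟩ := dualActiveI_iff_of_activeSet_Iic_subset _ hdual (hlt a)
    obtain ⟨horig, hreorient⟩ := activeI_iff_of_activeSet_Ici_subset _ hprimal (hlt a)
    exact ⟨hdual_orig, horig, hdual_reorient, hreorient⟩
  · obtain ⟨hdual_orig, hdual_reorient⟩ := dualActiveI_iff_of_activeSet_Ici_subset _ hdual (hlt a)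
    obtain ⟨horig, hreorient⟩ := activeI_iff_of_activeSet_Iic_subset _ hprimal (hlt a)
    exact ⟨hdual_orig, horig, hdual_reorient, hreorient⟩

/-- deletion/contraction dichotomy for pointwise orientation activities of an
oriented matroid perspective realized by `v` and `v' = π ∘ v`, with `e` the greatest element. -/
theorem statement18 {V W : Type*} [AddCommGroup V] [Module ℝ V] [FiniteDimensional ℝ V]
    [AddCommGroup W] [Module ℝ W] [FiniteDimensional ℝ W]
    {n : ℕ} (hn : 1 ≤ n) (e : Fin n) (he : ∀ i : Fin n, i ≤ e)
    (v : Fin n → V) (π : V →ₗ[ℝ] W) :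
    (∀ a : {a : Fin n // a ≠ e},
      (DualActiveI (π ∘ v) ↑a ↔
        DualActiveI (fun b : {b : Fin n // b ≠ e} => π (v ↑b)) a) ∧
      (ActiveI v ↑a ↔ ActiveI (fun b : {b : Fin n // b ≠ e} => v ↑b) a) ∧
      (DualActiveI (reorientAt (π ∘ v) e) ↑a ↔
        DualActiveI (fun b : {b : Fin n // b ≠ e} => (span ℝ {π (v e)}).mkQ (π (v ↑b))) a) ∧
      (ActiveI (reorientAt v e) ↑a ↔
        ActiveI (fun b : {b : Fin n // b ≠ e} => (span ℝ {v e}).mkQ (v ↑b)) a)) ∨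
    (∀ a : {a : Fin n // a ≠ e},
      (DualActiveI (π ∘ v) ↑a ↔
        DualActiveI (fun b : {b : Fin n // b ≠ e} => (span ℝ {π (v e)}).mkQ (π (v ↑b))) a) ∧
      (ActiveI v ↑a ↔ ActiveI (fun b : {b : Fin n // b ≠ e} => (span ℝ {v e}).mkQ (v ↑b)) a) ∧
      (DualActiveI (reorientAt (π ∘ v) e) ↑a ↔
        DualActiveI (fun b : {b : Fin n // b ≠ e} => π (v ↑b)) a) ∧
      (ActiveI (reorientAt v e) ↑a ↔
        ActiveI (fun b : {b : Fin n // b ≠ e} => v ↑b) a)) :=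
  statement18_general he v π
end
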